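/- Let E = {e_1,…,e_m} (m ≥ 1) be a uniform system of substring equations with e_i : T[p_i..q_i] = T[p'_i..q'_i]. Setting p_{m+1} = p_1, define r = |Σ_{i=1}^{m} (p_{i+1} − p'_i)| and R = Σ_{i=1}^{m} |p_{i+1} − p'_i|. Let S be a positive integer. If r is a period of the fragment T[p_1 + S .. q_1 − S] (i.e., T(k) = T(k + r) for all p_1 + S ≤ k ≤ q_1 − S − r) and T satisfies each of e_2,…,e_m with shortage S, then T satisfies e_1 with shortage R + S. -/

import Mathlib

/-!
Write `a i = p_{i+1} - p'_i` for the offset between the target of one equation and the source of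
the next one around the cycle.  For a position `k` of the first fragment, the position
`k + shift e_1` can be pushed through `e_2, …, e_m` in turn; relative to the start of the
`(j+1)`-st fragment it sits at `k - p_1 - Σ_{i ≤ j} a i`.  Every partial sum of the `a i` is at most
`R` in absolute value, so a margin of `R + S` at the start leaves a margin of `S` throughout, and
each of these equations applies (`cycle_walk`).  The walk ends at `k - Σ a i = k ∓ r`, and the
period `r` of the first fragment identifies `T (k ∓ r)` with `T k`.
-/

/-- A substring equation `T[p..q] = T[p'..q']`. -/
structure SubEq where
  p : ℤ
  q : ℤ
  p' : ℤ
  q' : ℤ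
deriving DecidableEq

/-- The equation is well-formed: both fragments have the same length. -/
def SubEq.valid (e : SubEq) : Prop := e.q - e.p = e.q' - e.p'

/-- The (oriented) shift of the equation. -/
def SubEq.shift (e : SubEq) : ℤ := e.p' - e.p

/-- The length of the equation. -/
def SubEq.len (e : SubEq) : ℤ := e.q - e.p + 1

/-- The equation is on a text of length `n`. -/
def SubEq.onText (e : SubEq) (n : ℤ) : Prop :=
  1 ≤ e.p ∧ 1 ≤ e.p' ∧ e.q ≤ n ∧ e.q' ≤ n

/-- `T` satisfies the equation `e` with shortage `S`. -/
def SatS {α : Type*} (T : ℤ → α) (e : SubEq) (S : ℤ) : Prop :=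
  ∀ k : ℤ, e.p + S ≤ k → k ≤ e.q - S → T k = T (k + e.shift)

/-- Pushing position `k + shift e_0` through the equations `f 1, …, f j`.  The cyclic index
does not occur here: `j < m` keeps `i + 1` below `m`.  The hypothesis `hA` says that the
accumulated offset never exceeds `R`. -/
theorem cycle_walk {α : Type*} (T : ℤ → α) (m : ℕ) (f : ℕ → SubEq)
    (hu : ∀ i < m, (f i).len = (f 0).len) (R S k : ℤ)
    (hsat : ∀ i : ℕ, 1 ≤ i → i < m → SatS T (f i) S)
    (hA : ∀ j < m, |∑ i ∈ Finset.range j, ((f (i + 1)).p - (f i).p')| ≤ R)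
    (hk1 : (f 0).p + (R + S) ≤ k) (hk2 : k ≤ (f 0).q - (R + S)) :
    ∀ j < m, T (k + (f 0).shift) =
      T (k - (f 0).p + (f j).p' - ∑ i ∈ Finset.range j, ((f (i + 1)).p - (f i).p')) := by
  intro j
  induction j with
  | zero =>
    intro _
    congr 1
    simp only [SubEq.shift, Finset.range_zero, Finset.sum_empty]
    ring
  | succ j ih =>
    intro hj
    have hb := abs_le.1 (hA (j + 1) hj)
    have hlen := hu (j + 1) hj
    rw [ih (by omega)]
    rw [Finset.sum_range_succ] at hb ⊢
    unfold SubEq.len at hlen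
    rw [hsat (j + 1) (by omega) hj _ (by omega) (by omega)]
    congr 1
    unfold SubEq.shift
    ring

/-- Lemma 12(b): for a uniform cycle of substring equations (indices modulo `m`,
so `p_{m+1} = p_1`), if `r = |Σ (p_{i+1} - p'_i)|` is a period of
`T[p_1 + S .. q_1 - S]` and `e_2,…,e_m` are satisfied with shortage `S`, then
`e_1` is satisfied with shortage `R + S`, where `R = Σ |p_{i+1} - p'_i|`. -/
theorem subEq_cycle_recover {α : Type*} (T : ℤ → α) (m : ℕ) (hm : 1 ≤ m)
    (f : ℕ → SubEq)
    (hv : ∀ i < m, (f i).valid)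
    (hu : ∀ i < m, (f i).len = (f 0).len)
    (r R : ℤ)
    (hr : r = |∑ i ∈ Finset.range m, ((f ((i + 1) % m)).p - (f i).p')|)
    (hR : R = ∑ i ∈ Finset.range m, |(f ((i + 1) % m)).p - (f i).p'|)
    (S : ℤ) (hS : 0 < S)
    (hper : ∀ k : ℤ, (f 0).p + S ≤ k → k ≤ (f 0).q - S - r → T k = T (k + r))
    (hsat : ∀ i : ℕ, 1 ≤ i → i < m → SatS T (f i) S) :
    SatS T (f 0) (R + S) := by
  intro k hk1 hk2
  -- Below the last index the cyclic successor is the ordinary one.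
  have hmod : ∀ i, i + 1 < m → (i + 1) % m = i + 1 := fun i hi => Nat.mod_eq_of_lt hi
  have hA : ∀ j < m, |∑ i ∈ Finset.range j, ((f (i + 1)).p - (f i).p')| ≤ R := by
    intro j hj
    have hcyc : ∑ i ∈ Finset.range j, ((f (i + 1)).p - (f i).p') =
        ∑ i ∈ Finset.range j, ((f ((i + 1) % m)).p - (f i).p') := by
      refine Finset.sum_congr rfl fun i hi => ?_
      rw [hmod i (by have := Finset.mem_range.1 hi; omega)]
    rw [hcyc, hR]
    exact (Finset.abs_sum_le_sum_abs _ _).trans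
      (Finset.sum_le_sum_of_subset_of_nonneg (Finset.range_mono hj.le)
        fun _ _ _ => abs_nonneg _)
  have hrR : r ≤ R := by
    rw [hr, hR]
    exact Finset.abs_sum_le_sum_abs _ _
  obtain ⟨n, rfl⟩ : ∃ n, m = n + 1 := ⟨m - 1, by omega⟩
  have hsum : ∑ i ∈ Finset.range (n + 1), ((f ((i + 1) % (n + 1))).p - (f i).p') =
      ∑ i ∈ Finset.range n, ((f (i + 1)).p - (f i).p') + ((f 0).p - (f n).p') := by
    rw [Finset.sum_range_succ, Nat.mod_self]
    congr 1
    refine Finset.sum_congr rfl fun i hi => ?_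
    rw [hmod i (by have := Finset.mem_range.1 hi; omega)]
  have hwalk := cycle_walk T (n + 1) f hu R S k hsat hA hk1 hk2 n (Nat.lt_succ_self n)
  rw [hsum] at hr
  rw [hwalk]
  generalize ∑ i ∈ Finset.range n, ((f (i + 1)).p - (f i).p') = A at hr ⊢
  -- The walk has ended at `k - D`, where `D` is the full cyclic sum and `r = |D|`.
  rcases abs_cases (A + ((f 0).p - (f n).p')) with ⟨h, h0⟩ | ⟨h, h0⟩
  · have key := hper (k - r) (by omega) (by omega)
    rw [sub_add_cancel] at key
    rw [← key]
    congr 1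
    omega
  · rw [hper k (by omega) (by omega)]
    congr 1
    omega
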